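/- Let Q, Q' ∈ ℝ^{k×N}, c ∈ ℝ^k with cᵢ > 0, n ∈ ℕ, and let x ∈ ℕ^N be a histogram with ‖x‖₁ = n. Let M(x) be the Laplace mechanism M_{Lap,c}(x, c⊙Q'). Then the expected ℓ₁ error satisfies ∫_{ℝ^k} ‖z − Qx‖₁ dM(x)(z) ≤ n ‖c⊙Q' − Q‖₁ + ‖c‖₁, where ‖A‖₁ = Σ_{i,l} |A_{i,l}| for a matrix A and ‖c‖₁ = Σᵢ cᵢ. (In particular, the expected ℓ₁ norm of a vector Y of independent Laplace coordinates with scales cᵢ equals ‖c‖₁.) -/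

import Mathlib

open MeasureTheory Finset

/-- Two histograms `x, x'` over a universe of size `N` are `(i,j)`-neighbors:
`‖x − x'‖₁ ≤ 2`, `xᵢ ≠ x'ᵢ` and `xⱼ ≠ x'ⱼ`. -/
def Neighbors {N : ℕ} (i j : Fin N) (x x' : Fin N → ℕ) : Prop :=
  (∑ l, |(x l : ℤ) - (x' l : ℤ)|) ≤ 2 ∧ x i ≠ x' i ∧ x j ≠ x' j

/-- `dX` is a privacy budget: nonnegative, symmetric, zero on the diagonal,
satisfying the triangle inequality. -/
def PrivacyBudget {N : ℕ} (dX : Fin N → Fin N → ℝ) : Prop :=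
  (∀ i j, 0 ≤ dX i j) ∧ (∀ i j, dX i j = dX j i) ∧ (∀ i, dX i i = 0) ∧
    (∀ i j k, dX i j ≤ dX i k + dX k j)

/-- A mechanism `M` (a map from histograms to probability measures on `Y`) is `dX`-private. -/
def DXPrivate {N : ℕ} {Y : Type*} [MeasurableSpace Y]
    (dX : Fin N → Fin N → ℝ) (M : (Fin N → ℕ) → Measure Y) : Prop :=
  ∀ i j : Fin N, i ≠ j → ∀ x x' : Fin N → ℕ, Neighbors i j x x' →
    ∀ S : Set Y, MeasurableSet S →
      M x S ≤ ENNReal.ofReal (Real.exp (dX i j)) * M x' S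

/-- The Laplace mechanism with scales `c`, centered at `a ∈ ℝ^k`. -/
noncomputable def lapMech {k : ℕ} (c a : Fin k → ℝ) : Measure (Fin k → ℝ) :=
  volume.withDensity fun z =>
    ENNReal.ofReal (∏ i, (1 / (2 * c i)) * Real.exp (-|z i - a i| / c i))

/-!
The noise `z - a` has independent Laplace coordinates: the density of `lapMech c a` is a product, so
`lapMech c a` is the product of the one-dimensional Laplace measures. The `i`-th coordinate has mean
absolute deviation `c i` (a Gamma integral), hence the noise has expected `ℓ₁` norm `‖c‖₁`. The
remaining error is the deterministic bias `‖(c⊙Q' - Q)x‖₁ ≤ ‖c⊙Q' - Q‖₁ ‖x‖₁`, which the triangle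
inequality adds to the noise.
-/

section ProductDensity

theorem lintegral_fin_prod_eq_prod {n : ℕ} {E : Fin n → Type*} {mE : ∀ i, MeasurableSpace (E i)}
    {μ : ∀ i, Measure (E i)} [∀ i, SigmaFinite (μ i)] {f : ∀ i, E i → ENNReal}
    (hf : ∀ i, Measurable (f i)) :
    ∫⁻ x, ∏ i, f i (x i) ∂Measure.pi μ = ∏ i, ∫⁻ t, f i t ∂μ i := by
  induction n with
  | zero => simp
  | succ n ih =>
    calc ∫⁻ x, ∏ i, f i (x i) ∂Measure.pi μ
        = ∫⁻ p, f 0 p.1 * ∏ i : Fin n, f i.succ (p.2 i)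
            ∂(μ 0).prod (Measure.pi fun i => μ i.succ) := by
          rw [(measurePreserving_piFinSuccAbove μ 0).symm.lintegral_map_equiv]
          simp only [Fin.prod_univ_succ]
          rfl
      _ = ∏ i, ∫⁻ t, f i t ∂μ i := by
          have h_tail : Measurable fun y : ∀ i : Fin n, E i.succ => ∏ i, f i.succ (y i) :=
            measurable_fun_prod _ fun i _ => (hf i.succ).comp (measurable_pi_apply i)
          rw [lintegral_prod_mul (hf 0).aemeasurable h_tail.aemeasurable, ih fun i => hf i.succ,
            Fin.prod_univ_succ]

variable {ι : Type*} [Fintype ι] {E : ι → Type*} {mE : ∀ i, MeasurableSpace (E i)}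
  {μ : ∀ i, Measure (E i)} [∀ i, SigmaFinite (μ i)] {f : ∀ i, E i → ENNReal}

theorem lintegral_fintype_prod_eq_prod (hf : ∀ i, Measurable (f i)) :
    ∫⁻ x, ∏ i, f i (x i) ∂Measure.pi μ = ∏ i, ∫⁻ t, f i t ∂μ i := by
  let e := (Fintype.equivFin ι).symm
  rw [(measurePreserving_piCongrLeft μ e).lintegral_map_equiv]
  simp_rw [← e.prod_comp, MeasurableEquiv.coe_piCongrLeft, Equiv.piCongrLeft_apply_apply]
  exact lintegral_fin_prod_eq_prod fun i => hf (e i)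

theorem pi_withDensity [∀ i, SigmaFinite ((μ i).withDensity (f i))]
    (hf : ∀ i, Measurable (f i)) :
    Measure.pi (fun i => (μ i).withDensity (f i)) =
      (Measure.pi μ).withDensity fun x => ∏ i, f i (x i) := by
  refine Measure.pi_eq fun s hs => ?_
  rw [withDensity_apply _ (MeasurableSet.univ_pi hs), Measure.restrict_pi_pi,
    lintegral_fintype_prod_eq_prod hf]
  exact prod_congr rfl fun i _ => (withDensity_apply _ (hs i)).symm

end ProductDensity

section Laplace

/-- The density of the Laplace distribution on `ℝ` with scale `c` and location `a`, meaningful for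
`0 < c`. -/
noncomputable def laplacePDFReal (c a t : ℝ) : ℝ :=
  1 / (2 * c) * Real.exp (-|t - a| / c)

/-- The Laplace distribution on `ℝ` with scale `c` and location `a`, with the argument order of
`lapMech`. -/
noncomputable def laplaceMeasure (c a : ℝ) : Measure ℝ :=
  volume.withDensity fun t => ENNReal.ofReal (laplacePDFReal c a t)

@[fun_prop]
theorem measurable_laplacePDFReal (c a : ℝ) : Measurable (laplacePDFReal c a) := by
  unfold laplacePDFReal
  fun_prop

theorem laplacePDFReal_nonneg {c : ℝ} (hc : 0 ≤ c) (a t : ℝ) : 0 ≤ laplacePDFReal c a t := by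
  unfold laplacePDFReal
  positivity

theorem integral_laplacePDFReal_mul_abs_sub_rpow {c p : ℝ} (hc : 0 < c) (hp : -1 < p) (a : ℝ) :
    ∫ t, laplacePDFReal c a t * |t - a| ^ p = c ^ p * Real.Gamma (p + 1) := by
  calc ∫ t, laplacePDFReal c a t * |t - a| ^ p
      = ∫ t, 1 / (2 * c) * (|t| ^ p * Real.exp (-(1 / c * |t|))) := by
        conv_rhs => rw [← integral_sub_right_eq_self _ a]
        refine integral_congr_ae (.of_forall fun t => ?_)
        simp only [laplacePDFReal, neg_div, one_div_mul_eq_div]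
        ring
    _ = 1 / c * ∫ t in Set.Ioi 0, t ^ (p + 1 - 1) * Real.exp (-(1 / c * t)) := by
        rw [integral_const_mul, integral_comp_abs (f := fun t => t ^ p * Real.exp (-(1 / c * t))),
          add_sub_cancel_right]
        ring
    _ = c ^ p * Real.Gamma (p + 1) := by
        rw [Real.integral_rpow_mul_exp_neg_mul_Ioi (by linarith) (by positivity), one_div_one_div,
          Real.rpow_add_one hc.ne']
        field_simp

theorem lintegral_laplaceMeasure_abs_sub_rpow {c p : ℝ} (hc : 0 < c) (hp : -1 < p) (a : ℝ) :
    ∫⁻ t, ENNReal.ofReal (|t - a| ^ p) ∂laplaceMeasure c a =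
      ENNReal.ofReal (c ^ p * Real.Gamma (p + 1)) := by
  have h_moment := integral_laplacePDFReal_mul_abs_sub_rpow hc hp a
  have h_pos : 0 < c ^ p * Real.Gamma (p + 1) :=
    mul_pos (Real.rpow_pos_of_pos hc p) (Real.Gamma_pos_of_pos (by linarith))
  have h_integrable : Integrable fun t => laplacePDFReal c a t * |t - a| ^ p :=
    .of_integral_ne_zero (h_moment ▸ h_pos.ne')
  have h_nonneg (t : ℝ) : 0 ≤ laplacePDFReal c a t * |t - a| ^ p :=
    mul_nonneg (laplacePDFReal_nonneg hc.le a t) (by positivity)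
  rw [← h_moment, ofReal_integral_eq_lintegral_ofReal h_integrable (.of_forall h_nonneg),
    laplaceMeasure, lintegral_withDensity_eq_lintegral_mul _ (by fun_prop) (by fun_prop)]
  simp only [Pi.mul_apply, ENNReal.ofReal_mul (laplacePDFReal_nonneg hc.le a _)]

theorem isProbabilityMeasure_laplaceMeasure {c : ℝ} (hc : 0 < c) (a : ℝ) :
    IsProbabilityMeasure (laplaceMeasure c a) :=
  ⟨by simpa using lintegral_laplaceMeasure_abs_sub_rpow hc neg_one_lt_zero a⟩

theorem lintegral_laplaceMeasure_abs_sub {c : ℝ} (hc : 0 < c) (a : ℝ) :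
    ∫⁻ t, ENNReal.ofReal |t - a| ∂laplaceMeasure c a = ENNReal.ofReal c := by
  simpa [one_add_one_eq_two] using
    lintegral_laplaceMeasure_abs_sub_rpow hc (p := 1) (by norm_num) a

end Laplace

section LaplaceMechanism

variable {k : ℕ} {c : Fin k → ℝ}

theorem lapMech_eq_pi (hc : ∀ i, 0 < c i) (a : Fin k → ℝ) :
    lapMech c a = Measure.pi fun i => laplaceMeasure (c i) (a i) := by
  have (i : Fin k) : SigmaFinite
      (volume.withDensity fun t => ENNReal.ofReal (laplacePDFReal (c i) (a i) t)) :=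
    have := isProbabilityMeasure_laplaceMeasure (hc i) (a i)
    inferInstanceAs (SigmaFinite (laplaceMeasure (c i) (a i)))
  simp only [laplaceMeasure]
  rw [pi_withDensity fun i => by fun_prop]
  simp_rw [← ENNReal.ofReal_prod_of_nonneg fun i _ => laplacePDFReal_nonneg (hc i).le (a i) _]
  rfl

theorem isProbabilityMeasure_lapMech (hc : ∀ i, 0 < c i) (a : Fin k → ℝ) :
    IsProbabilityMeasure (lapMech c a) := by
  have (i : Fin k) := isProbabilityMeasure_laplaceMeasure (hc i) (a i)
  rw [lapMech_eq_pi hc]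
  infer_instance

theorem lintegral_lapMech_abs_sub (hc : ∀ i, 0 < c i) (a : Fin k → ℝ) (i : Fin k) :
    ∫⁻ z, ENNReal.ofReal |z i - a i| ∂lapMech c a = ENNReal.ofReal (c i) := by
  have (j : Fin k) := isProbabilityMeasure_laplaceMeasure (hc j) (a j)
  rw [lapMech_eq_pi hc, ← lintegral_laplaceMeasure_abs_sub (hc i) (a i)]
  exact (measurePreserving_eval (fun j => laplaceMeasure (c j) (a j)) i).lintegral_comp
    (f := fun t => ENNReal.ofReal |t - a i|) (by fun_prop)

theorem lintegral_lapMech_sum_abs_sub (hc : ∀ i, 0 < c i) (a : Fin k → ℝ) :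
    ∫⁻ z, ENNReal.ofReal (∑ i, |z i - a i|) ∂lapMech c a = ENNReal.ofReal (∑ i, c i) := by
  simp_rw [ENNReal.ofReal_sum_of_nonneg fun _ _ => abs_nonneg _]
  rw [lintegral_finsetSum _ fun i _ => by fun_prop,
    ENNReal.ofReal_sum_of_nonneg fun i _ => (hc i).le]
  exact sum_congr rfl fun i _ => lintegral_lapMech_abs_sub hc a i

theorem lintegral_lapMech_sum_abs_sub_le (hc : ∀ i, 0 < c i) (a b : Fin k → ℝ) :
    ∫⁻ z, ENNReal.ofReal (∑ i, |z i - b i|) ∂lapMech c a ≤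
      ENNReal.ofReal (∑ i, |a i - b i| + ∑ i, c i) := by
  have := isProbabilityMeasure_lapMech hc a
  calc ∫⁻ z, ENNReal.ofReal (∑ i, |z i - b i|) ∂lapMech c a
      ≤ ∫⁻ z, (ENNReal.ofReal (∑ i, |a i - b i|) + ENNReal.ofReal (∑ i, |z i - a i|))
          ∂lapMech c a := by
        refine lintegral_mono fun z => ?_
        rw [← ENNReal.ofReal_add (by positivity) (by positivity), ← sum_add_distrib]
        refine ENNReal.ofReal_le_ofReal (sum_le_sum fun i _ => ?_)
        rw [add_comm]
        exact abs_sub_le _ _ _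
    _ = ENNReal.ofReal (∑ i, |a i - b i| + ∑ i, c i) := by
        rw [lintegral_add_left measurable_const, lintegral_lapMech_sum_abs_sub hc,
          lintegral_const, measure_univ, mul_one,
          ENNReal.ofReal_add (by positivity) (sum_nonneg fun i _ => (hc i).le)]

end LaplaceMechanism

theorem sum_norm_mulVec_le {m n R : Type*} [Fintype m] [Fintype n] [NonUnitalSeminormedRing R]
    (A : Matrix m n R) (v : n → R) :
    ∑ i, ‖A.mulVec v i‖ ≤ (∑ l, ‖v l‖) * ∑ i, ∑ l, ‖A i l‖ := by
  rw [mul_sum]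
  refine sum_le_sum fun i _ => ?_
  calc ‖A.mulVec v i‖
      ≤ ∑ l, ‖A i l‖ * ‖v l‖ := norm_sum_le_of_le _ fun l _ => norm_mul_le _ _
    _ ≤ ∑ l, ‖A i l‖ * ∑ l', ‖v l'‖ := by
        gcongr with l
        exact single_le_sum (f := fun l' => ‖v l'‖) (fun _ _ => norm_nonneg _) (mem_univ l)
    _ = (∑ l, ‖v l‖) * ∑ l, ‖A i l‖ := by rw [← sum_mul, mul_comm]

theorem stmt_5_general {k : ℕ} {ι : Type*} [Fintype ι] (Q Q' : Matrix (Fin k) ι ℝ)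
    {c : Fin k → ℝ} (hc : ∀ i, 0 < c i) (v : ι → ℝ) :
    ∫⁻ z, ENNReal.ofReal (∑ i, |z i - Q.mulVec v i|) ∂lapMech c (fun i => c i * Q'.mulVec v i)
      ≤ ENNReal.ofReal ((∑ l, |v l|) * (∑ i, ∑ l, |c i * Q' i l - Q i l|) + ∑ i, c i) := by
  have h_bias : ∑ i, |c i * Q'.mulVec v i - Q.mulVec v i| ≤
      (∑ l, |v l|) * ∑ i, ∑ l, |c i * Q' i l - Q i l| := by
    simpa only [Matrix.sub_mulVec, ← Matrix.mulVec_mulVec, Pi.sub_apply, Matrix.mulVec_diagonal,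
      Matrix.sub_apply, Matrix.diagonal_mul, Real.norm_eq_abs] using
      sum_norm_mulVec_le (Matrix.diagonal c * Q' - Q) v
  refine (lintegral_lapMech_sum_abs_sub_le hc _ _).trans (ENNReal.ofReal_le_ofReal ?_)
  gcongr

/-- Expected ℓ₁ error of the dX-private Laplace mechanism:
`∫ ‖z − Qx‖₁ dM(x)(z) ≤ n ‖c⊙Q' − Q‖₁ + ‖c‖₁`. -/
theorem stmt_5 {k N : ℕ} (Q Q' : Matrix (Fin k) (Fin N) ℝ)
    (c : Fin k → ℝ) (hc : ∀ i, 0 < c i) (n : ℕ)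
    (x : Fin N → ℕ) (hx : ∑ l, x l = n) :
    ∫⁻ z, ENNReal.ofReal (∑ i, |z i - Q.mulVec (fun l => (x l : ℝ)) i|)
        ∂ (lapMech c (fun i => c i * Q'.mulVec (fun l => (x l : ℝ)) i))
      ≤ ENNReal.ofReal ((n : ℝ) * (∑ i, ∑ l, |c i * Q' i l - Q i l|) + ∑ i, c i) := by
  simpa [← hx] using stmt_5_general Q Q' hc fun l => (x l : ℝ)
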